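/- Let A_i (i = 1,…,n) be finite nonempty sets and for each a ∈ A_i let f^a_i : ℝⁿ → ℝ be polyhedral, order-preserving, additively homogeneous and convex; define f_i(x) = min_{a∈A_i} f^a_i(x) and f^{(σ)}_i = f^{σ(i)}_i for strategies σ ∈ ∏_i A_i. Suppose strategies σ_0,…,σ_K and half-lines w^{(k)}(t) = tη^{(k)} + v^{(k)} (0 ≤ k ≤ K) satisfy: (a) each w^{(k)} is an invariant half-line of f^{(σ_k)}; (b) for each k < K, it is not the case that f(w^{(k)}(t)) = w^{(k)}(t+1) for all sufficiently large t; (c) for each k < K, f^{(σ_{k+1})}(w^{(k)}(t)) = f(w^{(k)}(t)) for all sufficiently large t; (d) for each k < K and each i such that f_i(w^{(k)}(t)) = f^{(σ_k)}_i(w^{(k)}(t)) for all sufficiently large t, one has σ_{k+1}(i) = σ_k(i); (e) for each k < K with η^{(k+1)} = η^{(k)}, one has v^{(k+1)} = lim_{m→∞} ḡ^m(v^{(k)}), where ḡ : ℝⁿ → ℝⁿ is defined by ḡ(y) = lim_{t→∞} (f^{(σ_{k+1})}(tη^{(k+1)} + y) − (t+1)η^{(k+1)}) (these limits exist). Then σ_s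 ≠ σ_m for all 0 ≤ s < m ≤ K; in particular K < ∏_i |A_i|, so the policy iteration algorithm terminates after finitely many iterations. -/

import Mathlib

open Filter Topology

/-- A function `g : ℝⁿ → ℝ` is polyhedral: there is a covering of `ℝⁿ` by finitely many
convex polyhedra (finite intersections of half-spaces) on each of which `g` is affine. -/
def IsPolyhedralFun {n : ℕ} (g : (Fin n → ℝ) → ℝ) : Prop :=
  ∃ (m : ℕ) (C : Fin m → Set (Fin n → ℝ)),
    (⋃ k, C k) = Set.univ ∧
    ∀ k : Fin m,
      (∃ (p : ℕ) (a : Fin p → Fin n → ℝ) (b : Fin p → ℝ),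
        C k = {x | ∀ l, ∑ j, a l j * x j ≤ b l}) ∧
      ∃ (A : Fin n → ℝ) (c : ℝ), ∀ x ∈ C k, g x = (∑ j, A j * x j) + c

/-!
Along a cycle `σ_s = σ_m` the slopes are constant: they decrease at every step, and the slope of an
invariant half-line depends only on the strategy. Every step of the cycle is then degenerate, so
the biases decrease, `v_{k+1} ≤ v_k`, and `v_k` is a fixed point of the convex topical map `g_k`
(the `ḡ` of `σ_k`).

The biases cannot decrease strictly around the cycle. A subgradient of `g_m = g_s` at `v_s` is a
stochastic matrix `Q`; the states maximizing `v_s - v_m` form a closed class of `Q`, on which `Q` is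
also a subgradient of `g_m` at `v_m`. Such classes can be pulled back along the cycle: in a class
for `g_{k+1}` at `v_{k+1}`, consider the states minimizing `v_k - v_{k+1}`. There the iterates of
`g_{k+1}` from `v_k` never drop below `v_k`, while they converge to `v_{k+1}`, so `v_k = v_{k+1}`;
and `g_{k+1}` fixes `v_k` there, so `g_{k+1} = g_k` by conservativity. Back at `s` this yields a
maximizer of `v_s - v_m` at which it vanishes, so `v_s ≤ v_m`. Hence `v_{s+1} = v_s`, and `f`
leaves the half-line of `σ_s` invariant, contradicting (b).
-/

section Subgradient

variable {ι : Type*}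

/-- A functional on `ℝ^ι` is *topical* if it is order-preserving and additively homogeneous; a
vector-valued map is treated through its coordinate functionals. -/
structure IsTopical (h : (ι → ℝ) → ℝ) : Prop where
  monotone : Monotone h
  map_const_add : ∀ (c : ℝ) (x : ι → ℝ), h (fun j => c + x j) = c + h x

theorem exists_subgradient {E : Type*} [AddCommGroup E] [Module ℝ E] [TopologicalSpace E]
    [IsTopologicalAddGroup E] [ContinuousSMul ℝ E] {f : E → ℝ} (hf : ConvexOn ℝ Set.univ f)
    (hcont : Continuous f) (u : E) : ∃ L : E →L[ℝ] ℝ, ∀ x, f u + L (x - u) ≤ f x := by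
  have hopen : IsOpen {p : E × ℝ | p.1 ∈ Set.univ ∧ f p.1 < p.2} := by
    simp only [Set.mem_univ, true_and]
    exact isOpen_lt (hcont.comp continuous_fst) continuous_snd
  obtain ⟨Λ, hΛ⟩ := geometric_hahn_banach_open_point (x := (u, f u)) hf.convex_strict_epigraph
    hopen (by simp)
  have hsplit (x : E) (r : ℝ) : Λ (x, r) = Λ (x, 0) + r * Λ (0, 1) := by
    rw [← smul_eq_mul, ← map_smul, ← map_add]
    simp
  have hneg : Λ (0, 1) < 0 := by
    have := hΛ (u, f u + 1) (by simp)
    rw [hsplit u (f u + 1), hsplit u (f u)] at this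
    linarith
  refine ⟨(-Λ (0, 1))⁻¹ • Λ.comp (.inl ℝ E ℝ), fun x => le_of_forall_gt_imp_ge_of_dense ?_⟩
  intro r hr
  have hsep : Λ (x, 0) - Λ (u, 0) < (r - f u) * -Λ (0, 1) := by
    have := hΛ (x, r) (by simpa using hr)
    rw [hsplit x r, hsplit u (f u)] at this
    linarith
  have hdiff : Λ (x - u, 0) = Λ (x, 0) - Λ (u, 0) := by simp [← map_sub]
  have : (-Λ (0, 1))⁻¹ * Λ (x - u, 0) < r - f u := by
    rwa [hdiff, inv_mul_lt_iff₀ (neg_pos.2 hneg), mul_comm]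
  simp only [smul_apply, ContinuousLinearMap.comp_apply,
    ContinuousLinearMap.inl_apply, smul_eq_mul]
  linarith

theorem IsTopical.mem_stdSimplex_of_subgradient [Fintype ι] {h : (ι → ℝ) → ℝ} (hh : IsTopical h)
    {u q : ι → ℝ} (hq : ∀ x, h u + q ⬝ᵥ (x - u) ≤ h x) : q ∈ stdSimplex ℝ ι := by
  classical
  constructor
  · intro j
    have hle : u - Pi.single j 1 ≤ u :=
      sub_le_self u (Pi.single_nonneg.2 zero_le_one)
    have := hq (u - Pi.single j 1)
    rw [sub_sub_cancel_left, dotProduct_neg, dotProduct_single_one] at this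
    linarith [hh.monotone hle]
  · have hdiff (c : ℝ) : (fun j => c + u j) - u = c • (1 : ι → ℝ) := by
      ext j
      simp
    have hconst (c : ℝ) : c * ∑ j, q j ≤ c := by
      have := hq fun j => c + u j
      rw [hh.map_const_add, hdiff, dotProduct_smul, dotProduct_one, smul_eq_mul] at this
      linarith
    linarith [hconst 1, hconst (-1)]

theorem IsTopical.exists_subgradient_mem_stdSimplex [Fintype ι] {h : (ι → ℝ) → ℝ}
    (hh : IsTopical h) (hconv : ConvexOn ℝ Set.univ h) (u : ι → ℝ) :
    ∃ q ∈ stdSimplex ℝ ι, ∀ x, h u + q ⬝ᵥ (x - u) ≤ h x := by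
  classical
  obtain ⟨L, hL⟩ := exists_subgradient hconv hconv.locallyLipschitz.continuous u
  have hdot (y : ι → ℝ) : (dotProductEquiv ℝ ι).symm (L : (ι → ℝ) →ₗ[ℝ] ℝ) ⬝ᵥ y = L y :=
    LinearMap.congr_fun ((dotProductEquiv ℝ ι).apply_symm_apply (L : (ι → ℝ) →ₗ[ℝ] ℝ)) y
  have hsub : ∀ x, h u + (dotProductEquiv ℝ ι).symm (L : (ι → ℝ) →ₗ[ℝ] ℝ) ⬝ᵥ (x - u) ≤ h x :=
    fun x => (hdot (x - u)).symm ▸ hL x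
  exact ⟨_, hh.mem_stdSimplex_of_subgradient hsub, hsub⟩

end Subgradient

section SupportedAverage

variable {ι : Type*} [Fintype ι] {q y : ι → ℝ} {C : Set ι} {δ : ℝ}

theorem dotProduct_sub_of_mem_stdSimplex (hq : q ∈ stdSimplex ℝ ι) (y : ι → ℝ) (δ : ℝ) :
    q ⬝ᵥ y - δ = ∑ j, q j * (y j - δ) := by
  simp only [dotProduct, mul_sub, Finset.sum_sub_distrib, ← Finset.sum_mul, hq.2, one_mul]

theorem mul_sub_nonneg_of_supported (hq : q ∈ stdSimplex ℝ ι) (hC : ∀ j ∉ C, q j = 0)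
    (hy : ∀ j ∈ C, δ ≤ y j) (j : ι) : 0 ≤ q j * (y j - δ) := by
  by_cases hj : j ∈ C
  · exact mul_nonneg (hq.1 j) (sub_nonneg.2 (hy j hj))
  · simp [hC j hj]

theorem le_dotProduct_of_supported (hq : q ∈ stdSimplex ℝ ι) (hC : ∀ j ∉ C, q j = 0)
    (hy : ∀ j ∈ C, δ ≤ y j) : δ ≤ q ⬝ᵥ y := by
  rw [← sub_nonneg, dotProduct_sub_of_mem_stdSimplex hq]
  exact Finset.sum_nonneg fun j _ => mul_sub_nonneg_of_supported hq hC hy j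

theorem dotProduct_eq_of_supported (hq : q ∈ stdSimplex ℝ ι) (hC : ∀ j ∉ C, q j = 0)
    (hy : ∀ j ∈ C, y j = δ) : q ⬝ᵥ y = δ := by
  rw [← sub_eq_zero, dotProduct_sub_of_mem_stdSimplex hq]
  refine Finset.sum_eq_zero fun j _ => mul_eq_zero.2 ?_
  by_cases hj : j ∈ C
  · exact .inr (sub_eq_zero.2 (hy j hj))
  · exact .inl (hC j hj)

theorem eq_zero_of_dotProduct_le_of_supported (hq : q ∈ stdSimplex ℝ ι) (hC : ∀ j ∉ C, q j = 0)
    (hy : ∀ j ∈ C, δ ≤ y j) (hle : q ⬝ᵥ y ≤ δ) {j : ι} (hj : y j ≠ δ) : q j = 0 := by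
  have hnonneg : ∀ k ∈ Finset.univ, 0 ≤ q k * (y k - δ) :=
    fun k _ => mul_sub_nonneg_of_supported hq hC hy k
  have hsum : ∑ k, q k * (y k - δ) = 0 := by
    refine le_antisymm ?_ (Finset.sum_nonneg hnonneg)
    rw [← dotProduct_sub_of_mem_stdSimplex hq]
    exact sub_nonpos.2 hle
  have hterm := (Finset.sum_eq_zero_iff_of_nonneg hnonneg).1 hsum j (Finset.mem_univ j)
  exact (mul_eq_zero.1 hterm).resolve_right (sub_ne_zero.2 hj)

end SupportedAverage

section Argmin

variable {ι : Type*} {C : Set ι} {y : ι → ℝ}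

/-- The subset of `C` on which `y` attains its minimum over `C`. -/
def argminOn (C : Set ι) (y : ι → ℝ) : Set ι := {i ∈ C | IsMinOn y C i}

theorem apply_eq_apply_of_mem_argminOn {i j : ι} (hi : i ∈ argminOn C y)
    (hj : j ∈ argminOn C y) : y j = y i :=
  le_antisymm (hj.2 hi.1) (hi.2 hj.1)

theorem argminOn_nonempty [Finite ι] (hC : C.Nonempty) (y : ι → ℝ) : (argminOn C y).Nonempty :=
  C.exists_min_image y C.toFinite hC

end Argmin

section SubgradientClass

variable {ι : Type*} [Fintype ι] {g g' : (ι → ℝ) → ι → ℝ} {u v : ι → ℝ} {Q : ι → ι → ℝ}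
  {C : Set ι}

/-- `C` is a closed class of the matrix `Q`, stochastic on `C`, whose rows indexed by `C` are
subgradients of the coordinates of `g` at `v`. The class is meant for points with `g v = v` on `C`,
hence the affine minorant of `g · i` takes the value `v i`, rather than `g v i`, at `v`. -/
structure IsSubgradientClass (g : (ι → ℝ) → ι → ℝ) (v : ι → ℝ) (Q : ι → ι → ℝ) (C : Set ι) :
    Prop where
  mem_stdSimplex : ∀ i ∈ C, Q i ∈ stdSimplex ℝ ι
  eq_zero : ∀ i ∈ C, ∀ j ∉ C, Q i j = 0
  add_dotProduct_le : ∀ i ∈ C, ∀ x, v i + Q i ⬝ᵥ (x - v) ≤ g x i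

theorem exists_isSubgradientClass_univ (htop : ∀ i, IsTopical fun x => g x i)
    (hconv : ∀ i, ConvexOn ℝ Set.univ fun x => g x i) (hv : g v = v) :
    ∃ Q, IsSubgradientClass g v Q Set.univ := by
  choose Q hQ hsub using fun i => (htop i).exists_subgradient_mem_stdSimplex (hconv i) v
  refine ⟨Q, fun i _ => hQ i, fun _ _ j hj => absurd (Set.mem_univ j) hj, fun i _ x => ?_⟩
  simpa only [hv] using hsub i x

namespace IsSubgradientClass

theorem congr (h : IsSubgradientClass g v Q C) (hg : ∀ i ∈ C, ∀ x, g x i = g' x i) :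
    IsSubgradientClass g' v Q C where
  mem_stdSimplex := h.mem_stdSimplex
  eq_zero := h.eq_zero
  add_dotProduct_le i hi x := hg i hi x ▸ h.add_dotProduct_le i hi x

theorem le_iterate (h : IsSubgradientClass g v Q C) (m : ℕ) : ∀ i ∈ C, v i ≤ (g^[m] v) i := by
  induction m with
  | zero => exact fun _ _ => le_rfl
  | succ m ih =>
    intro i hi
    have haverage : 0 ≤ Q i ⬝ᵥ (g^[m] v - v) :=
      le_dotProduct_of_supported (h.mem_stdSimplex i hi) (h.eq_zero i hi)
        fun j hj => sub_nonneg.2 (ih j hj)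
    rw [Function.iterate_succ_apply']
    linarith [h.add_dotProduct_le i hi (g^[m] v)]

theorem map_apply_eq_of_mem_argminOn (h : IsSubgradientClass g v Q C) (hu : g u ≤ u) {i : ι}
    (hi : i ∈ argminOn C (u - v)) : g u i = u i := by
  have haverage : (u - v) i ≤ Q i ⬝ᵥ (u - v) :=
    le_dotProduct_of_supported (h.mem_stdSimplex i hi.1) (h.eq_zero i hi.1) hi.2
  have := h.add_dotProduct_le i hi.1 u
  rw [Pi.sub_apply] at haverage
  linarith [hu i]

theorem eq_zero_of_notMem_argminOn (h : IsSubgradientClass g v Q C) (hu : g u ≤ u) {i j : ι}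
    (hi : i ∈ argminOn C (u - v)) (hj : j ∉ argminOn C (u - v)) : Q i j = 0 := by
  by_cases hjC : j ∈ C
  · have haverage : Q i ⬝ᵥ (u - v) ≤ (u - v) i := by
      have := h.add_dotProduct_le i hi.1 u
      rw [Pi.sub_apply]
      linarith [hu i]
    refine eq_zero_of_dotProduct_le_of_supported (h.mem_stdSimplex i hi.1) (h.eq_zero i hi.1)
      hi.2 haverage fun heq => hj ⟨hjC, fun k hk => ?_⟩
    exact heq.le.trans (hi.2 hk)
  · exact h.eq_zero i hi.1 j hjC

theorem argminOn_sub (h : IsSubgradientClass g v Q C) (hu : g u ≤ u) :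
    IsSubgradientClass g u Q (argminOn C (u - v)) where
  mem_stdSimplex i hi := h.mem_stdSimplex i hi.1
  eq_zero _ hi _ hj := h.eq_zero_of_notMem_argminOn hu hi hj
  add_dotProduct_le i hi x := by
    have hgap : Q i ⬝ᵥ (u - v) = (u - v) i :=
      dotProduct_eq_of_supported (h.mem_stdSimplex i hi.1)
        (fun _ hj => h.eq_zero_of_notMem_argminOn hu hi hj)
        fun _ hj => apply_eq_apply_of_mem_argminOn hi hj
    calc
      u i + Q i ⬝ᵥ (x - u) = v i + Q i ⬝ᵥ (x - v) := by
        rw [← sub_sub_sub_cancel_right x u v, dotProduct_sub, hgap, Pi.sub_apply]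
        ring
      _ ≤ g x i := h.add_dotProduct_le i hi.1 x

end IsSubgradientClass

end SubgradientClass

section ConservativeStep

variable {ι : Type*}

/-- A degenerate iteration, at which the slope does not change, in terms of the maps
`g`, `g'` (the paper's `ḡ`) of the old and new strategies and of the old and new biases
`v`, `v'`. -/
structure IsConservativeStep (g g' : (ι → ℝ) → ι → ℝ) (v v' : ι → ℝ) : Prop where
  bias_le : v' ≤ v
  map_le : g' v ≤ v
  map_eq : ∀ i, g' v i = v i → ∀ x, g' x i = g x i
  tendsto_iterate : Tendsto (fun m : ℕ => g'^[m] v) atTop (𝓝 v')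

theorem IsConservativeStep.exists_subclass [Fintype ι] {g g' : (ι → ℝ) → ι → ℝ}
    {v v' : ι → ℝ} {Q : ι → ι → ℝ} {C : Set ι} (hstep : IsConservativeStep g g' v v')
    (hne : C.Nonempty) (h : IsSubgradientClass g' v' Q C) :
    ∃ C' ⊆ C, C'.Nonempty ∧ (∀ i ∈ C', v i = v' i) ∧ IsSubgradientClass g v Q C' := by
  have hclass := h.argminOn_sub hstep.map_le
  refine ⟨argminOn C (v - v'), fun i hi => hi.1, argminOn_nonempty hne _, fun i hi => ?_,
    hclass.congr fun i hi => hstep.map_eq i (h.map_apply_eq_of_mem_argminOn hstep.map_le hi)⟩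
  refine le_antisymm ?_ (hstep.bias_le i)
  exact ge_of_tendsto' (tendsto_pi_nhds.1 hstep.tendsto_iterate i)
    fun m => hclass.le_iterate m i hi

theorem bias_le_of_conservative_cycle [Finite ι] {g : ℕ → (ι → ℝ) → ι → ℝ} {v : ℕ → ι → ℝ}
    {s m : ℕ} (hsm : s ≤ m) (htop : ∀ i, IsTopical fun x => g m x i)
    (hconv : ∀ i, ConvexOn ℝ Set.univ fun x => g m x i)
    (hs : g m (v s) = v s) (hm : g m (v m) = v m)
    (hstep : ∀ k, s ≤ k → k < m → IsConservativeStep (g k) (g (k + 1)) (v k) (v (k + 1))) :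
    v s ≤ v m := by
  cases nonempty_fintype ι
  obtain hι | hι := isEmpty_or_nonempty ι
  · exact fun i => hι.elim i
  obtain ⟨Q, hQ⟩ := exists_isSubgradientClass_univ htop hconv hs
  obtain ⟨C, hCM, ⟨i, hi⟩, hCv, -⟩ : ∃ C ⊆ argminOn Set.univ (v m - v s), C.Nonempty ∧
      (∀ i ∈ C, v s i = v m i) ∧ IsSubgradientClass (g s) (v s) Q C := by
    refine Nat.decreasingInduction'
      (P := fun k => ∃ C ⊆ argminOn Set.univ (v m - v s), C.Nonempty ∧
        (∀ i ∈ C, v k i = v m i) ∧ IsSubgradientClass (g k) (v k) Q C) ?_ hsm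
      ⟨_, subset_rfl, argminOn_nonempty Set.univ_nonempty _, fun _ _ => rfl,
        hQ.argminOn_sub hm.le⟩
    rintro k hkm hsk ⟨C, hCM, hne, hCv, hclass⟩
    obtain ⟨C', hC', hne', hv', hclass'⟩ := (hstep k hsk hkm).exists_subclass hne hclass
    exact ⟨C', hC'.trans hCM, hne', fun i hi => (hv' i hi).trans (hCv i (hC' hi)), hclass'⟩
  intro j
  have hmin : (v m - v s) i ≤ (v m - v s) j := (hCM hi).2 (Set.mem_univ j)
  simpa [hCv i hi] using hmin

end ConservativeStep

section HalfLine

variable {ι : Type*} {F G : (ι → ℝ) → ι → ℝ} {η η' v v' : ι → ℝ}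

/-- The half-line `t ↦ tη + v` of slope `η` and bias `v`. -/
def halfLine (η v : ι → ℝ) (t : ℝ) : ι → ℝ := t • η + v

/-- `g(w(t)) = w(t + 1)` for all sufficiently large `t`, where `w` is the half-line `(η, v)`. -/
def IsInvariantHalfLine (g : (ι → ℝ) → ι → ℝ) (η v : ι → ℝ) : Prop :=
  ∀ᶠ t in atTop, g (halfLine η v t) = halfLine η v (t + 1)

theorem halfLine_apply (η v : ι → ℝ) (t : ℝ) (i : ι) : halfLine η v t i = t * η i + v i := rfl

theorem halfLine_combo (a b s t : ℝ) (η v v' : ι → ℝ) :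
    halfLine η (a • v + b • v') (a * s + b * t) = a • halfLine η v s + b • halfLine η v' t := by
  simp only [halfLine]
  module

theorem exists_halfLine_le_const_add [Finite ι] (htop : ∀ i, IsTopical fun x => F x i)
    (hsuper : ∀ᶠ t in atTop, F (halfLine η v t) ≤ halfLine η v (t + 1))
    (hsub : ∀ᶠ t in atTop, halfLine η' v' (t + 1) ≤ F (halfLine η' v' t)) :
    ∃ c T : ℝ, ∀ m : ℕ, ∀ i, halfLine η' v' (T + m) i ≤ c + halfLine η v (T + m) i := by
  obtain ⟨T, hT⟩ := eventually_atTop.1 (hsuper.and hsub)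
  obtain ⟨c, hc⟩ := Finite.exists_le (halfLine η' v' T - halfLine η v T)
  refine ⟨c, T, fun m => ?_⟩
  induction m with
  | zero => exact fun i => by simpa using hc i
  | succ m ih =>
    intro i
    obtain ⟨hup, hlow⟩ := hT (T + m) (by simp)
    rw [Nat.cast_succ, ← add_assoc]
    calc
      halfLine η' v' (T + m + 1) i ≤ F (halfLine η' v' (T + m)) i := hlow i
      _ ≤ F (fun j => c + halfLine η v (T + m) j) i := (htop i).monotone ih
      _ = c + F (halfLine η v (T + m)) i := (htop i).map_const_add c _
      _ ≤ c + halfLine η v (T + m + 1) i := by gcongr; exact hup i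

theorem slope_le_of_halfLine [Finite ι] (htop : ∀ i, IsTopical fun x => F x i)
    (hsuper : ∀ᶠ t in atTop, F (halfLine η v t) ≤ halfLine η v (t + 1))
    (hsub : ∀ᶠ t in atTop, halfLine η' v' (t + 1) ≤ F (halfLine η' v' t)) : η' ≤ η := by
  obtain ⟨c, T, hle⟩ := exists_halfLine_le_const_add htop hsuper hsub
  intro i
  by_contra! hlt
  obtain ⟨m, hm⟩ := exists_lt_nsmul (sub_pos.2 hlt) (c + halfLine η v T i - halfLine η' v' T i)
  have := hle m i
  rw [nsmul_eq_mul] at hm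
  simp only [halfLine_apply] at this hm
  linarith

theorem eq_of_convexOn_of_le_of_tendsto {φ : ℝ → ℝ} {T c : ℝ} (hφ : ConvexOn ℝ (Set.Ici T) φ)
    (hle : ∀ t ≥ T, φ t ≤ c) (hlim : Tendsto φ atTop (𝓝 c)) : ∀ t ≥ T, φ t = c := by
  intro t ht
  refine le_antisymm (hle t ht) ?_
  have hmid : ∀ᶠ s in atTop, φ s ≤ (φ t + c) / 2 := by
    filter_upwards [eventually_ge_atTop t] with s hs
    have hreflect : T ≤ 2 * s - t := by linarith
    have := hφ.2 (Set.mem_Ici.2 ht) (Set.mem_Ici.2 hreflect) one_half_pos.le one_half_pos.le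
      (add_halves 1)
    simp only [smul_eq_mul] at this
    rw [show 1 / 2 * t + 1 / 2 * (2 * s - t) = s by ring] at this
    linarith [hle _ hreflect]
  linarith [le_of_tendsto hlim hmid]

/-- The map `ḡ(y) = lim_{t → ∞} (F(tη + y) - (t + 1)η)`. It has junk values where the limit does
not exist; its existence is the predicate `HasAsymptoticMap`. -/
noncomputable def asymptoticMap (F : (ι → ℝ) → ι → ℝ) (η y : ι → ℝ) (i : ι) : ℝ :=
  limUnder atTop fun t : ℝ => F (halfLine η y t) i - (t + 1) * η i

/-- The limits defining `asymptoticMap F η` exist at every point. -/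
def HasAsymptoticMap (F : (ι → ℝ) → ι → ℝ) (η : ι → ℝ) : Prop :=
  ∀ y i, Tendsto (fun t : ℝ => F (halfLine η y t) i - (t + 1) * η i) atTop
    (𝓝 (asymptoticMap F η y i))

theorem hasAsymptoticMap_and_eq_of_tendsto (h : ∀ y, Tendsto
      (fun (t : ℝ) i => F (halfLine η y t) i - (t + 1) * η i) atTop (𝓝 (G y))) :
    HasAsymptoticMap F η ∧ asymptoticMap F η = G := by
  have heq : asymptoticMap F η = G :=
    funext fun y => funext fun i => (tendsto_pi_nhds.1 (h y) i).limUnder_eq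
  exact ⟨fun y i => heq ▸ tendsto_pi_nhds.1 (h y) i, heq⟩

theorem asymptoticMap_apply_congr {i : ι} (h : ∀ x, F x i = G x i) (η y : ι → ℝ) :
    asymptoticMap F η y i = asymptoticMap G η y i := by
  simp only [asymptoticMap, h]

namespace HasAsymptoticMap

theorem isTopical (hF : HasAsymptoticMap F η) {i : ι} (htop : IsTopical fun x => F x i) :
    IsTopical fun y => asymptoticMap F η y i where
  monotone x y hxy := le_of_tendsto_of_tendsto' (hF x i) (hF y i) fun t =>
    sub_le_sub_right (htop.monotone (add_le_add_right hxy _)) _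
  map_const_add c y := by
    refine tendsto_nhds_unique (hF _ i) (((hF y i).const_add c).congr fun t => ?_)
    have hshift : halfLine η (fun j => c + y j) t = fun j => c + halfLine η y t j :=
      funext fun j => add_left_comm _ _ _
    rw [hshift, htop.map_const_add, add_sub_assoc]

theorem convexOn (hF : HasAsymptoticMap F η) {i : ι}
    (hconv : ConvexOn ℝ Set.univ fun x => F x i) :
    ConvexOn ℝ Set.univ fun y => asymptoticMap F η y i := by
  refine ⟨convex_univ, fun x _ y _ a b ha hb hab => ?_⟩
  refine le_of_tendsto_of_tendsto' (hF (a • x + b • y) i)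
    (((hF x i).const_smul a).add ((hF y i).const_smul b)) fun t => ?_
  have hcombo : halfLine η (a • x + b • y) t = a • halfLine η x t + b • halfLine η y t := by
    rw [← halfLine_combo, ← add_mul, hab, one_mul]
  have := hconv.2 (Set.mem_univ (halfLine η x t)) (Set.mem_univ (halfLine η y t)) ha hb hab
  simp only [hcombo, smul_eq_mul] at this ⊢
  linear_combination this + (t + 1) * η i * hab

theorem apply_le (hF : HasAsymptoticMap F η)
    (hsuper : ∀ᶠ t in atTop, F (halfLine η v t) ≤ halfLine η v (t + 1)) :
    asymptoticMap F η v ≤ v := by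
  refine fun i => le_of_tendsto (hF v i) (hsuper.mono fun t ht => ?_)
  exact sub_le_iff_le_add'.2 (ht i)

theorem apply_eq (hF : HasAsymptoticMap F η) (hinv : IsInvariantHalfLine F η v) :
    asymptoticMap F η v = v := by
  ext i
  refine tendsto_nhds_unique (hF v i) (tendsto_const_nhds.congr' (hinv.mono fun t ht => ?_))
  simp only [ht, halfLine_apply, add_sub_cancel_left]

theorem eventually_apply_eq (hF : HasAsymptoticMap F η) {i : ι}
    (hconv : ConvexOn ℝ Set.univ fun x => F x i)
    (hsuper : ∀ᶠ t in atTop, F (halfLine η v t) ≤ halfLine η v (t + 1))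
    (hv : asymptoticMap F η v i = v i) :
    ∀ᶠ t in atTop, F (halfLine η v t) i = halfLine η v (t + 1) i := by
  obtain ⟨T, hT⟩ := eventually_atTop.1 hsuper
  have hconvLine : ConvexOn ℝ (Set.Ici T) fun t => F (halfLine η v t) i - (t + 1) * η i := by
    refine ⟨convex_Ici T, fun s _ t _ a b ha hb hab => ?_⟩
    have hcombo : halfLine η v (a * s + b * t) = a • halfLine η v s + b • halfLine η v t := by
      rw [← halfLine_combo, Convex.combo_self hab]
    have := hconv.2 (Set.mem_univ (halfLine η v s)) (Set.mem_univ (halfLine η v t)) ha hb hab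
    simp only [smul_eq_mul, hcombo] at this ⊢
    linear_combination this + η i * hab
  refine eventually_atTop.2 ⟨T, fun t ht => ?_⟩
  have := eq_of_convexOn_of_le_of_tendsto hconvLine
    (fun t ht => sub_le_iff_le_add'.2 (hT t ht i)) (hv ▸ hF v i) t ht
  exact sub_eq_iff_eq_add'.1 this

end HasAsymptoticMap

end HalfLine

section PolicyIteration

variable {ι : Type*} {A : ι → Type*} {f : ∀ i, A i → (ι → ℝ) → ℝ} {K s m k : ℕ}
  {σ : ℕ → ∀ i, A i} {η v : ℕ → ι → ℝ}

/-- The map `f^{(τ)}` of a strategy `τ`. -/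
def strategyMap (f : ∀ i, A i → (ι → ℝ) → ℝ) (τ : ∀ i, A i) (x : ι → ℝ) (i : ι) : ℝ :=
  f i (τ i) x

/-- The map `f = min_τ f^{(τ)}`; the infimum is a minimum since it is used for finite `A i`. -/
noncomputable def minMap (f : ∀ i, A i → (ι → ℝ) → ℝ) (x : ι → ℝ) (i : ι) : ℝ :=
  ⨅ a, f i a x

theorem minMap_le_strategyMap [∀ i, Finite (A i)] (f : ∀ i, A i → (ι → ℝ) → ℝ) (τ : ∀ i, A i)
    (x : ι → ℝ) : minMap f x ≤ strategyMap f τ x :=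
  fun i => ciInf_le (Set.finite_range fun a => f i a x).bddBelow (τ i)

/-- A run of `K` steps of policy iteration: strategies `σ_k` and half-lines `(η_k, v_k)` satisfying
conditions (a)–(e), in this order. -/
structure IsPolicyIteration (f : ∀ i, A i → (ι → ℝ) → ℝ) (K : ℕ) (σ : ℕ → ∀ i, A i)
    (η v : ℕ → ι → ℝ) : Prop where
  invariant : ∀ k ≤ K, IsInvariantHalfLine (strategyMap f (σ k)) (η k) (v k)
  not_invariant_minMap : ∀ k < K, ¬ IsInvariantHalfLine (minMap f) (η k) (v k)
  strategyMap_succ : ∀ k < K, ∀ᶠ t in atTop,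
    strategyMap f (σ (k + 1)) (halfLine (η k) (v k) t) = minMap f (halfLine (η k) (v k) t)
  conservative : ∀ k < K, ∀ i,
    (∀ᶠ t in atTop,
      minMap f (halfLine (η k) (v k) t) i = strategyMap f (σ k) (halfLine (η k) (v k) t) i) →
    σ (k + 1) i = σ k i
  spectralProjection : ∀ k < K, η (k + 1) = η k → ∃ gbar : (ι → ℝ) → ι → ℝ,
    (∀ y, Tendsto (fun (t : ℝ) i =>
        strategyMap f (σ (k + 1)) (halfLine (η (k + 1)) y t) i - (t + 1) * η (k + 1) i)
      atTop (𝓝 (gbar y))) ∧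
    Tendsto (fun m : ℕ => gbar^[m] (v k)) atTop (𝓝 (v (k + 1)))

namespace IsPolicyIteration

theorem superinvariant [∀ i, Finite (A i)] (h : IsPolicyIteration f K σ η v) (hk : k < K) :
    ∀ᶠ t in atTop, strategyMap f (σ (k + 1)) (halfLine (η k) (v k) t)
      ≤ halfLine (η k) (v k) (t + 1) := by
  filter_upwards [h.invariant k hk.le, h.strategyMap_succ k hk] with t hinv hmin
  exact hmin.trans_le ((minMap_le_strategyMap f (σ k) _).trans_eq hinv)

theorem antitoneOn_slope [Finite ι] [∀ i, Finite (A i)] (h : IsPolicyIteration f K σ η v)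
    (htop : ∀ i a, IsTopical (f i a)) : AntitoneOn η (Set.Iic K) := by
  refine antitoneOn_of_succ_le Set.ordConnected_Iic fun k _ _ hk => ?_
  exact slope_le_of_halfLine (fun i => htop i _) (h.superinvariant (Nat.lt_of_succ_le hk))
    ((h.invariant (k + 1) hk).mono fun _ ht => ht.ge)

theorem slope_eq_of_strategy_eq [Finite ι] [∀ i, Finite (A i)] (h : IsPolicyIteration f K σ η v)
    (htop : ∀ i a, IsTopical (f i a)) (hmK : m ≤ K) (hσ : σ s = σ m) (hsk : s ≤ k)
    (hkm : k ≤ m) : η k = η s := by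
  have hanti := h.antitoneOn_slope htop
  have hsm : η s ≤ η m := by
    refine slope_le_of_halfLine (v' := v s) (fun i => htop i _)
      ((h.invariant m hmK).mono fun _ ht => ht.le) ?_
    exact hσ ▸ (h.invariant s (hsk.trans (hkm.trans hmK))).mono fun _ ht => ht.ge
  exact le_antisymm (hanti ((hsk.trans hkm).trans hmK) (hkm.trans hmK) hsk)
    (hsm.trans (hanti (hkm.trans hmK) hmK hkm))

theorem hasAsymptoticMap (h : IsPolicyIteration f K σ η v) (hk : k < K)
    (hη : η (k + 1) = η k) : HasAsymptoticMap (strategyMap f (σ (k + 1))) (η k) := by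
  obtain ⟨_, hgbar, -⟩ := h.spectralProjection k hk hη
  exact hη ▸ (hasAsymptoticMap_and_eq_of_tendsto hgbar).1

theorem tendsto_iterate_asymptoticMap (h : IsPolicyIteration f K σ η v) (hk : k < K)
    (hη : η (k + 1) = η k) :
    Tendsto (fun l : ℕ => (asymptoticMap (strategyMap f (σ (k + 1))) (η k))^[l] (v k)) atTop
      (𝓝 (v (k + 1))) := by
  obtain ⟨_, hgbar, hlim⟩ := h.spectralProjection k hk hη
  rwa [← (hasAsymptoticMap_and_eq_of_tendsto hgbar).2, hη] at hlim

theorem isConservativeStep [∀ i, Finite (A i)] (h : IsPolicyIteration f K σ η v)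
    (htop : ∀ i a, IsTopical (f i a)) (hconv : ∀ i a, ConvexOn ℝ Set.univ (f i a))
    (hk : k < K) (hη : η (k + 1) = η k) :
    IsConservativeStep (asymptoticMap (strategyMap f (σ k)) (η k))
      (asymptoticMap (strategyMap f (σ (k + 1))) (η k)) (v k) (v (k + 1)) := by
  have hlimit := h.hasAsymptoticMap hk hη
  have hmap_le := hlimit.apply_le (h.superinvariant hk)
  have htendsto := h.tendsto_iterate_asymptoticMap hk hη
  refine ⟨?_, hmap_le, fun i hi x => asymptoticMap_apply_congr (fun y => ?_) _ _, htendsto⟩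
  · have hmono : Monotone (asymptoticMap (strategyMap f (σ (k + 1))) (η k)) :=
      fun x y hxy i => (hlimit.isTopical (htop i _)).monotone hxy
    exact le_of_tendsto' htendsto fun l =>
      hmono.antitone_iterate_of_map_le hmap_le (Nat.zero_le l)
  · have hσ : σ (k + 1) i = σ k i := by
      refine h.conservative k hk i ?_
      filter_upwards [hlimit.eventually_apply_eq (hconv i _) (h.superinvariant hk) hi,
        h.invariant k hk.le, h.strategyMap_succ k hk] with t hnew hold hmin
      rw [← hmin, hnew, hold]
    simp only [strategyMap, hσ]

theorem bias_eq_of_strategy_eq [Finite ι] [∀ i, Finite (A i)] (h : IsPolicyIteration f K σ η v)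
    (htop : ∀ i a, IsTopical (f i a)) (hconv : ∀ i a, ConvexOn ℝ Set.univ (f i a))
    (hsm : s < m) (hmK : m ≤ K) (hσ : σ s = σ m) : v (s + 1) = v s := by
  have hη {k : ℕ} (hsk : s ≤ k) (hkm : k ≤ m) : η k = η s :=
    h.slope_eq_of_strategy_eq htop hmK hσ hsk hkm
  have hstep (k : ℕ) (hsk : s ≤ k) (hkm : k < m) :
      IsConservativeStep (asymptoticMap (strategyMap f (σ k)) (η s))
        (asymptoticMap (strategyMap f (σ (k + 1))) (η s)) (v k) (v (k + 1)) :=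
    hη hsk hkm.le ▸ h.isConservativeStep htop hconv (hkm.trans_le hmK)
      ((hη (by omega) hkm).trans (hη hsk hkm.le).symm)
  have hlimit : HasAsymptoticMap (strategyMap f (σ m)) (η s) := by
    obtain ⟨k, rfl⟩ := Nat.exists_eq_succ_of_ne_zero (Nat.ne_zero_of_lt hsm)
    have hsk : s ≤ k := Nat.le_of_lt_succ hsm
    exact hη hsk k.le_succ ▸ h.hasAsymptoticMap hmK ((hη hsm.le le_rfl).trans
      (hη hsk k.le_succ).symm)
  have hcycle : v s ≤ v m := bias_le_of_conservative_cycle hsm.le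
    (fun i => hlimit.isTopical (htop i _)) (fun i => hlimit.convexOn (hconv i _))
    (hlimit.apply_eq (hσ ▸ h.invariant s (hsm.le.trans hmK)))
    (hlimit.apply_eq (hη hsm.le le_rfl ▸ h.invariant m hmK)) hstep
  have hanti : AntitoneOn v (Set.Icc s m) := antitoneOn_of_succ_le Set.ordConnected_Icc
    fun k _ hk hk' => (hstep k hk.1 (Nat.lt_of_succ_le hk'.2)).bias_le
  exact le_antisymm (hstep s le_rfl hsm).bias_le
    (hcycle.trans (hanti ⟨s.le_succ, hsm⟩ ⟨hsm.le, le_rfl⟩ hsm))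

theorem strategy_ne [Finite ι] [∀ i, Finite (A i)] (h : IsPolicyIteration f K σ η v)
    (htop : ∀ i a, IsTopical (f i a)) (hconv : ∀ i a, ConvexOn ℝ Set.univ (f i a))
    (hsm : s < m) (hmK : m ≤ K) : σ s ≠ σ m := by
  intro hσ
  have hη : η (s + 1) = η s := h.slope_eq_of_strategy_eq htop hmK hσ s.le_succ hsm
  have hv : v (s + 1) = v s := h.bias_eq_of_strategy_eq htop hconv hsm hmK hσ
  have hinv := h.invariant (s + 1) (hsm.trans_le hmK)
  rw [hη, hv] at hinv
  refine h.not_invariant_minMap s (hsm.trans_le hmK) ?_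
  filter_upwards [hinv, h.strategyMap_succ s (hsm.trans_le hmK)] with t ht hmin
  exact hmin.symm.trans ht

end IsPolicyIteration

theorem policy_iteration_terminates_general [Fintype ι] [∀ i, Fintype (A i)]
    (htop : ∀ i a, IsTopical (f i a)) (hconv : ∀ i a, ConvexOn ℝ Set.univ (f i a))
    (h : IsPolicyIteration f K σ η v) :
    (∀ s m : ℕ, s < m → m ≤ K → σ s ≠ σ m) ∧ K < ∏ i, Fintype.card (A i) := by
  classical
  have hne (s m : ℕ) (hsm : s < m) (hmK : m ≤ K) : σ s ≠ σ m :=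
    h.strategy_ne htop hconv hsm hmK
  have hinj : Function.Injective fun k : Fin (K + 1) => σ k :=
    Function.Injective.of_lt_imp_ne fun a b hab => hne a b hab (Nat.le_of_lt_succ b.2)
  refine ⟨hne, Nat.lt_of_succ_le ?_⟩
  simpa only [Fintype.card_fin, Fintype.card_pi] using Fintype.card_le_of_injective _ hinj

end PolicyIteration

/-- Setting of the policy iteration algorithm for multichain mean
payoff games: `f_i(x) = min_{a ∈ A i} f^a_i(x)` with each `f^a_i` polyhedral,
order-preserving, additively homogeneous and convex; strategies `σ_0, …, σ_K` and
half-lines `w^{(k)}(t) = t η^{(k)} + v^{(k)}` satisfying conditions (a)–(e) of the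
algorithm.  Then no strategy is selected twice (`σ_s ≠ σ_m` for `s < m ≤ K`); in
particular `K < ∏ i |A i|`, so the algorithm terminates after finitely many iterations. -/
theorem policy_iteration_terminates
    (n : ℕ) (A : Fin n → Type) [∀ i, Fintype (A i)] [∀ i, Nonempty (A i)]
    (fa : ∀ i : Fin n, A i → (Fin n → ℝ) → ℝ)
    (hpoly : ∀ i a, IsPolyhedralFun (fa i a))
    (hop : ∀ i a, ∀ x y : Fin n → ℝ, x ≤ y → fa i a x ≤ fa i a y)
    (hah : ∀ i a (lam : ℝ) (x : Fin n → ℝ), fa i a (fun j => lam + x j) = lam + fa i a x)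
    (hconv : ∀ i a, ConvexOn ℝ Set.univ (fa i a))
    (K : ℕ) (σ : ℕ → ∀ i : Fin n, A i) (η v : ℕ → Fin n → ℝ)
    -- (a) each `w^{(k)}` is an invariant half-line of `f^{(σ_k)}`
    (ha : ∀ k ≤ K, ∃ T : ℝ, ∀ t ≥ T, ∀ i : Fin n,
      fa i (σ k i) (fun j => t * η k j + v k j) = (t + 1) * η k i + v k i)
    -- (b) for `k < K`, `w^{(k)}` is not an invariant half-line of `f`
    (hb : ∀ k < K, ¬ ∃ T : ℝ, ∀ t ≥ T, ∀ i : Fin n,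
      (⨅ a : A i, fa i a (fun j => t * η k j + v k j)) = (t + 1) * η k i + v k i)
    -- (c) `f^{(σ_{k+1})}(w^{(k)}(t)) = f(w^{(k)}(t))` for all sufficiently large `t`
    (hc : ∀ k < K, ∃ T : ℝ, ∀ t ≥ T, ∀ i : Fin n,
      fa i (σ (k + 1) i) (fun j => t * η k j + v k j)
        = ⨅ a : A i, fa i a (fun j => t * η k j + v k j))
    -- (d) the improvement is conservative
    (hd : ∀ k < K, ∀ i : Fin n,
      (∃ T : ℝ, ∀ t ≥ T,
        (⨅ a : A i, fa i a (fun j => t * η k j + v k j))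
          = fa i (σ k i) (fun j => t * η k j + v k j)) →
      σ (k + 1) i = σ k i)
    -- (e) at degenerate iterations, `v^{(k+1)}` is the nonlinear spectral projection
    -- `lim_{m→∞} ḡ^m(v^{(k)})`, where `ḡ(y) = lim_{t→∞} (f^{(σ_{k+1})}(tη^{(k+1)}+y)
    -- − (t+1)η^{(k+1)})`
    (he : ∀ k < K, η (k + 1) = η k →
      ∃ gbar : (Fin n → ℝ) → (Fin n → ℝ),
        (∀ y : Fin n → ℝ,
          Tendsto (fun t : ℝ => fun i : Fin n =>
              fa i (σ (k + 1) i) (fun j => t * η (k + 1) j + y j)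
                - (t + 1) * η (k + 1) i)
            atTop (𝓝 (gbar y))) ∧
        Tendsto (fun m : ℕ => gbar^[m] (v k)) atTop (𝓝 (v (k + 1)))) :
    (∀ s m : ℕ, s < m → m ≤ K → σ s ≠ σ m) ∧
    K < ∏ i : Fin n, Fintype.card (A i) := by
  refine policy_iteration_terminates_general (fun i a => ⟨hop i a, hah i a⟩) hconv
    ⟨?_, ?_, ?_, ?_, he⟩ <;>
    simpa only [IsInvariantHalfLine, eventually_atTop, funext_iff]
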